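/- arXiv:2512.11445 — 2 statements merged into one kernel-verified Lean document; each statement's English description precedes it below -/
import Mathlib

section
/- Let s ≥ 1 and let S be a DS(n, s) sequence whose symbols belong to a set T of n symbols. Suppose T is the disjoint union of k nonempty subsets T_1, …, T_k such that the restricted sequence S_{T_i} has length C_i ≥ 1 for each i, and set C = C_1 + ⋯ + C_k. Then k·|S| ≤ C·λ_s(3k). (This is a precise form of the paper's Combination Theorem for restricted Davenport–Schinzel sequences, stated there as |S| = O(C·λ_s(k)/k).) -/
/-- The alternating list `a, b, a, b, …` of length `m`. -/
def altList {α : Type*} (a b : α) : ℕ → List α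
  | 0 => []
  | m + 1 => a :: altList b a m

/-- `S` is a Davenport–Schinzel sequence of order `s` on (at most) `n` symbols:
it uses at most `n` distinct symbols, no two adjacent elements are equal, and it
contains no alternating subsequence `a, b, a, b, …` of length `s + 2` for distinct
symbols `a, b`. -/
def IsDSSeq {α : Type*} [DecidableEq α] (n s : ℕ) (S : List α) : Prop :=
  S.toFinset.card ≤ n ∧ S.Chain' (· ≠ ·) ∧
    ∀ a b : α, a ≠ b → ¬ (altList a b (s + 2)).Sublist S

/-- `lambdaDS s n` is the maximum length `λ_s(n)` of a `DS(n, s)` sequence. -/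
noncomputable def lambdaDS (s n : ℕ) : ℕ :=
  sSup {m | ∃ S : List ℕ, IsDSSeq n s S ∧ S.length = m}

/-- The restriction `S_A` of a sequence `S` to a set of symbols `A`: delete all
elements not in `A`, then collapse each maximal run of equal adjacent elements
into a single element. -/
def restrictSeq {α : Type*} [DecidableEq α] (S : List α) (A : Finset α) : List α :=
  (S.filter fun x => decide (x ∈ A)).destutter (· ≠ ·)

/-!
Colour each symbol by the index of a class containing it, and count the runs of the restrictions of
`S` to the `k` colour classes. Prepending a symbol creates at most one run, so as long as there are
more than `2k` runs one can cut off a suffix with exactly `2k` runs. Such a suffix has at most `2k`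
symbols, hence length at most `λ_s(2k)`. The cut splits at most one run per class, so the remaining
prefix has lost at least `k` runs. Every `k` of the `C` runs thus pay for `λ_s(2k)` elements of `S`.
-/

section Destutter

variable {α : Type*}

theorem isChain_ne_append_or_append_tail {l₁ l₂ : List α} (h₁ : l₁.IsChain (· ≠ ·))
    (h₂ : l₂.IsChain (· ≠ ·)) :
    (l₁ ++ l₂).IsChain (· ≠ ·) ∨ (l₁ ++ l₂.tail).IsChain (· ≠ ·) := by
  rcases l₂ with _ | ⟨y, l₂⟩
  · simpa using h₁
  by_cases hy : y ∈ l₁.getLast?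
  · refine .inr (List.isChain_append.2 ⟨h₁, h₂.tail, fun x hx z hz => ?_⟩)
    rw [Option.mem_unique hx hy]
    exact (List.isChain_cons.1 h₂).1 z hz
  · refine .inl (List.isChain_append.2 ⟨h₁, h₂, fun x hx z hz hxz => hy ?_⟩)
    obtain rfl : y = z := by simpa using hz
    exact hxz ▸ hx

variable [DecidableEq α]

theorem length_destutter_ne_le_of_sublist {l₁ l₂ : List α} (h : l₁.Sublist l₂) :
    (l₁.destutter (· ≠ ·)).length ≤ (l₂.destutter (· ≠ ·)).length :=
  (l₁.isChain_destutter _).length_le_length_destutter_ne ((l₁.destutter_sublist _).trans h)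

theorem length_destutter_ne_cons_le (x : α) (l : List α) :
    ((x :: l).destutter (· ≠ ·)).length ≤ (l.destutter (· ≠ ·)).length + 1 := by
  have hsub : ((x :: l).destutter (· ≠ ·)).tail.Sublist l := ((x :: l).destutter_sublist _).tail
  have hle := ((x :: l).isChain_destutter (· ≠ ·)).tail.length_le_length_destutter_ne hsub
  rw [List.length_tail] at hle
  exact Nat.le_add_of_sub_le hle

theorem card_toFinset_le_length_destutter_ne (l : List α) :
    l.toFinset.card ≤ (l.destutter (· ≠ ·)).length := by
  rw [List.card_toFinset]
  exact l.nodup_dedup.isChain.length_le_length_destutter_ne l.dedup_sublist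

theorem length_destutter_ne_add_le_append (l₁ l₂ : List α) :
    (l₁.destutter (· ≠ ·)).length + (l₂.destutter (· ≠ ·)).length ≤
      ((l₁ ++ l₂).destutter (· ≠ ·)).length + 1 := by
  have h₁ := l₁.destutter_sublist (· ≠ ·)
  have h₂ := l₂.destutter_sublist (· ≠ ·)
  rcases isChain_ne_append_or_append_tail (l₁.isChain_destutter _) (l₂.isChain_destutter _)
    with hchain | hchain
  · have hle := hchain.length_le_length_destutter_ne (h₁.append h₂)
    rw [List.length_append] at hle
    omega
  · have hle := hchain.length_le_length_destutter_ne (h₁.append ((List.tail_sublist _).trans h₂))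
    rw [List.length_append, List.length_tail] at hle
    omega

end Destutter

section AltList

variable {α : Type*}

theorem altList_sublist_altList (a b : α) {m p : ℕ} (h : m ≤ p) :
    (altList a b m).Sublist (altList a b p) := by
  induction m generalizing a b p with
  | zero => exact List.nil_sublist _
  | succ m ih =>
    obtain _ | p := p
    · omega
    · exact (ih b a (Nat.le_of_succ_le_succ h)).cons_cons a

theorem map_altList {β : Type*} (f : α → β) (a b : α) (m : ℕ) :
    (altList a b m).map f = altList (f a) (f b) m := by
  induction m generalizing a b with
  | zero => rfl
  | succ m ih => exact congrArg (f a :: ·) (ih b a)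

end AltList

section ConsecutivePairs

variable {α : Type*}

/-- The pairs `(x₀, x₁), (x₂, x₃), …` of a list `x₀, x₁, x₂, …`; a last unpaired element is dropped.
Each occurrence of `(a, b)` among these disjoint pairs extends an alternation `a, b, a, b, …` by two
elements, which is how the length of a Davenport–Schinzel sequence gets bounded. -/
def consecutivePairs : List α → List (α × α)
  | x :: y :: l => (x, y) :: consecutivePairs l
  | _ => []

theorem length_le_two_mul_length_consecutivePairs :
    ∀ l : List α, l.length ≤ 2 * (consecutivePairs l).length + 1
  | [] => by simp
  | [_] => by simp
  | _ :: _ :: l => by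
    have ih := length_le_two_mul_length_consecutivePairs l
    simp only [consecutivePairs, List.length_cons]
    omega

theorem altList_count_consecutivePairs_sublist [DecidableEq (α × α)] (a b : α) :
    ∀ l : List α, (altList a b (2 * (consecutivePairs l).count (a, b))).Sublist l
  | [] => List.nil_sublist _
  | [_] => List.nil_sublist _
  | x :: y :: l => by
    have ih := altList_count_consecutivePairs_sublist a b l
    by_cases h : (x, y) = (a, b)
    · obtain ⟨rfl, rfl⟩ := Prod.mk.inj h
      rw [consecutivePairs, List.count_cons_self, Nat.mul_succ]
      exact (ih.cons_cons y).cons_cons x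
    · rw [consecutivePairs, List.count_cons_of_ne h]
      exact (ih.cons y).cons x

theorem two_mul_count_consecutivePairs_le [DecidableEq (α × α)] {l : List α} {p : α × α} {m : ℕ}
    (h : ¬(altList p.1 p.2 (m + 1)).Sublist l) : 2 * (consecutivePairs l).count p ≤ m := by
  by_contra! hlt
  exact h ((altList_sublist_altList _ _ hlt).trans
    (altList_count_consecutivePairs_sublist p.1 p.2 l))

theorem mem_and_mem_and_rel_of_mem_consecutivePairs {R : α → α → Prop} {p : α × α} :
    ∀ {l : List α}, l.IsChain R → p ∈ consecutivePairs l → p.1 ∈ l ∧ p.2 ∈ l ∧ R p.1 p.2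
  | x :: y :: l, hl, hp => by
    rcases List.mem_cons.1 hp with rfl | hp
    · exact ⟨by simp, by simp, hl.rel⟩
    · obtain ⟨h₁, h₂, hR⟩ := mem_and_mem_and_rel_of_mem_consecutivePairs
        (List.isChain_of_isChain_cons hl.tail) hp
      exact ⟨.tail x (.tail y h₁), .tail x (.tail y h₂), hR⟩

end ConsecutivePairs

section DavenportSchinzel

variable {α : Type*} [DecidableEq α] {m n s : ℕ} {S B : List α}

theorem IsDSSeq.of_card_le (hS : IsDSSeq n s S) (hcard : S.toFinset.card ≤ m) : IsDSSeq m s S :=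
  ⟨hcard, hS.2⟩

theorem IsDSSeq.infix (hS : IsDSSeq n s S) (hB : B <:+: S) : IsDSSeq n s B :=
  ⟨(Finset.card_le_card fun _ hx => List.mem_toFinset.2 (hB.subset (List.mem_toFinset.1 hx))).trans
    hS.1, List.IsChain.infix hS.2.1 hB, fun a b hab halt =>
      hS.2.2 a b hab (halt.trans hB.sublist)⟩

theorem isDSSeq_map_iff {β : Type*} [DecidableEq β] {f : α → β} (hf : f.Injective) :
    IsDSSeq n s (S.map f) ↔ IsDSSeq n s S := by
  have hcard : (S.map f).toFinset.card = S.toFinset.card := by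
    rw [← Finset.card_image_of_injective S.toFinset hf]
    congr 1
    ext
    simp
  have hchain : (S.map f).IsChain (· ≠ ·) ↔ S.IsChain (· ≠ ·) := by
    simp only [List.isChain_map, hf.ne_iff]
  refine and_congr (by rw [hcard]) (and_congr hchain ⟨fun h a b hab halt => ?_,
    fun h a b hab halt => ?_⟩)
  · exact h (f a) (f b) (hf.ne hab) (map_altList f a b _ ▸ halt.map f)
  · obtain ⟨a, -, rfl⟩ := List.mem_map.1 (halt.subset (by simp [altList] : a ∈ _))
    obtain ⟨b, -, rfl⟩ := List.mem_map.1 (halt.subset (by simp [altList] : b ∈ _))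
    rw [← map_altList] at halt
    obtain ⟨l, hl, heq⟩ := List.sublist_map_iff.1 halt
    rw [← List.map_injective_iff.2 hf heq] at hl
    exact h a b (ne_of_apply_ne f hab) hl

theorem IsDSSeq.two_mul_length_consecutivePairs_le (hS : IsDSSeq n s S) :
    2 * (consecutivePairs S).length ≤ n * n * (s + 1) := by
  have hmem : ∀ p ∈ consecutivePairs S, p.1 ∈ S ∧ p.2 ∈ S ∧ p.1 ≠ p.2 := fun _ hp =>
    mem_and_mem_and_rel_of_mem_consecutivePairs hS.2.1 hp
  have hcard : (consecutivePairs S).toFinset.card ≤ n * n :=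
    calc (consecutivePairs S).toFinset.card
      _ ≤ (S.toFinset ×ˢ S.toFinset).card := Finset.card_le_card fun p hp => by
          simp [hmem p (List.mem_toFinset.1 hp)]
      _ ≤ n * n := by
          rw [Finset.card_product]
          exact Nat.mul_le_mul hS.1 hS.1
  rw [← List.sum_toFinset_count_eq_length, Finset.mul_sum]
  refine (Finset.sum_le_card_nsmul _ _ (s + 1) fun p hp => ?_).trans (Nat.mul_le_mul_right _ hcard)
  exact two_mul_count_consecutivePairs_le (hS.2.2 _ _ (hmem p (List.mem_toFinset.1 hp)).2.2)

theorem bddAbove_length_isDSSeq (s n : ℕ) :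
    BddAbove {m | ∃ S : List α, IsDSSeq n s S ∧ S.length = m} := by
  refine ⟨n * n * (s + 1) + 1, ?_⟩
  rintro _ ⟨S, hS, rfl⟩
  exact (length_le_two_mul_length_consecutivePairs S).trans
    (Nat.add_le_add_right hS.two_mul_length_consecutivePairs_le 1)

theorem IsDSSeq.length_le_lambdaDS (hS : IsDSSeq n s S) : S.length ≤ lambdaDS s n := by
  obtain ⟨f, hf⟩ := Countable.exists_injective_nat {x // x ∈ S}
  have hattach : IsDSSeq n s S.attach := by
    rwa [← isDSSeq_map_iff Subtype.val_injective, List.attach_map_subtype_val]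
  exact le_csSup (bddAbove_length_isDSSeq s n)
    ⟨S.attach.map f, (isDSSeq_map_iff hf).2 hattach, by simp⟩

theorem lambdaDS_mono (s : ℕ) : Monotone (lambdaDS s) := by
  intro m n hmn
  refine csSup_le' ?_
  rintro _ ⟨S, hS, rfl⟩
  exact (hS.of_card_le (hS.1.trans hmn)).length_le_lambdaDS

end DavenportSchinzel

section ColorRuns

variable {α ι : Type*} [DecidableEq α] [DecidableEq ι] [Fintype ι]

/-- The number of runs of the restrictions of a sequence to the colour classes of `c`, summed over
all classes. This is the quantity `C` of the combination theorem, for the partition of the symbols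
into the fibres of `c`. -/
def colorRuns (c : α → ι) (S : List α) : ℕ :=
  ∑ i, ((S.filter (c · = i)).destutter (· ≠ ·)).length

theorem colorRuns_nil (c : α → ι) : colorRuns c [] = 0 := by
  simp [colorRuns]

theorem colorRuns_cons_le (c : α → ι) (x : α) (S : List α) :
    colorRuns c (x :: S) ≤ colorRuns c S + 1 := by
  have hfilter (i : ι) : (((x :: S).filter (c · = i)).destutter (· ≠ ·)).length ≤
      ((S.filter (c · = i)).destutter (· ≠ ·)).length + if c x = i then 1 else 0 := by
    by_cases hx : c x = i
    · simpa [hx] using length_destutter_ne_cons_le x (S.filter (c · = i))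
    · simp [hx]
  simpa [colorRuns, Finset.sum_add_distrib] using Finset.univ.sum_le_sum fun i _ => hfilter i

theorem colorRuns_add_le_append (c : α → ι) (L B : List α) :
    colorRuns c L + colorRuns c B ≤ colorRuns c (L ++ B) + Fintype.card ι := by
  have hfilter (i : ι) := length_destutter_ne_add_le_append
    (L.filter (c · = i)) (B.filter (c · = i))
  simpa [colorRuns, Finset.sum_add_distrib] using Finset.univ.sum_le_sum fun i _ => hfilter i

theorem card_toFinset_le_colorRuns (c : α → ι) (S : List α) :
    S.toFinset.card ≤ colorRuns c S := by
  rw [Finset.card_eq_sum_card_fiberwise (f := c) (t := Finset.univ) (by simp)]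
  refine Finset.sum_le_sum fun i _ => ?_
  simpa [List.toFinset_filter] using card_toFinset_le_length_destutter_ne (S.filter (c · = i))

theorem exists_eq_append_colorRuns_eq (c : α → ι) {m : ℕ} {S : List α} (hm : m ≤ colorRuns c S) :
    ∃ L B, S = L ++ B ∧ colorRuns c B = m := by
  induction S with
  | nil => exact ⟨[], [], rfl, by rw [colorRuns_nil] at hm ⊢; omega⟩
  | cons x S ih =>
    by_cases h : m ≤ colorRuns c S
    · obtain ⟨L, B, rfl, hB⟩ := ih h
      exact ⟨x :: L, B, rfl, hB⟩
    · have hcons := colorRuns_cons_le c x S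
      exact ⟨[], x :: S, rfl, by omega⟩

theorem colorRuns_le_sum_length_restrictSeq {c : α → ι} {T : ι → Finset α} {S : List α}
    (hc : ∀ x ∈ S, x ∈ T (c x)) : colorRuns c S ≤ ∑ i, (restrictSeq S (T i)).length := by
  refine Finset.sum_le_sum fun i _ => length_destutter_ne_le_of_sublist ?_
  have hfilter : S.filter (c · = i) = (S.filter (· ∈ T i)).filter (c · = i) := by
    rw [List.filter_filter]
    exact List.filter_congr fun x hx => by
      have hx' : x ∈ T (c x) := hc x hx
      by_cases hi : c x = i <;> simp_all
  exact hfilter ▸ List.filter_sublist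

theorem IsDSSeq.length_le_lambdaDS_of_colorRuns_le {c : α → ι} {m n s : ℕ} {S : List α}
    (hS : IsDSSeq n s S) (hm : colorRuns c S ≤ m) : S.length ≤ lambdaDS s m :=
  (hS.of_card_le ((card_toFinset_le_colorRuns c S).trans hm)).length_le_lambdaDS

theorem IsDSSeq.card_mul_length_le [Nonempty ι] (c : α → ι) {n s : ℕ} {S : List α}
    (hS : IsDSSeq n s S) :
    Fintype.card ι * S.length ≤
      max (colorRuns c S) (Fintype.card ι) * lambdaDS s (2 * Fintype.card ι) := by
  induction hlen : S.length using Nat.strong_induction_on generalizing S with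
  | _ N ih =>
  subst hlen
  set k := Fintype.card ι
  have hk : 0 < k := Fintype.card_pos
  by_cases hle : colorRuns c S ≤ 2 * k
  · exact Nat.mul_le_mul (le_max_right _ _) (hS.length_le_lambdaDS_of_colorRuns_le hle)
  obtain ⟨L, B, rfl, hB⟩ := exists_eq_append_colorRuns_eq c (not_le.1 hle).le
  have hL : IsDSSeq n s L := hS.infix (List.prefix_append L B).isInfix
  have hBlen : B.length ≤ lambdaDS s (2 * k) :=
    (hS.infix (List.suffix_append L B).isInfix).length_le_lambdaDS_of_colorRuns_le hB.le
  have hBpos : 0 < B.length := List.length_pos_iff.2 fun h => by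
    rw [h, colorRuns_nil] at hB
    omega
  have hLlen : L.length < (L ++ B).length := by
    rw [List.length_append]
    exact Nat.lt_add_of_pos_right hBpos
  have hruns : colorRuns c L + colorRuns c B ≤ colorRuns c (L ++ B) + k :=
    colorRuns_add_le_append c L B
  calc k * (L ++ B).length
    _ = k * L.length + k * B.length := by rw [List.length_append, Nat.mul_add]
    _ ≤ max (colorRuns c L) k * lambdaDS s (2 * k) + k * lambdaDS s (2 * k) :=
        Nat.add_le_add (ih _ hLlen hL rfl) (Nat.mul_le_mul_left k hBlen)
    _ = (max (colorRuns c L) k + k) * lambdaDS s (2 * k) := (Nat.add_mul ..).symm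
    _ ≤ max (colorRuns c (L ++ B)) k * lambdaDS s (2 * k) :=
        Nat.mul_le_mul_right _ (by omega)

end ColorRuns

theorem restricted_ds_combination_general {α ι : Type*} [DecidableEq α] [Fintype ι]
    {n s : ℕ} {S : List α} (hS : IsDSSeq n s S) (T : ι → Finset α)
    (hST : ∀ x ∈ S, ∃ i, x ∈ T i)
    (hcard : Fintype.card ι ≤ ∑ i, (restrictSeq S (T i)).length) :
    Fintype.card ι * S.length ≤
      (∑ i, (restrictSeq S (T i)).length) * lambdaDS s (2 * Fintype.card ι) := by
  classical
  cases isEmpty_or_nonempty ι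
  · simp
  choose! c hc using hST
  exact (hS.card_mul_length_le c).trans <|
    Nat.mul_le_mul_right _ (max_le (colorRuns_le_sum_length_restrictSeq hc) hcard)

/-- Combination theorem for restricted Davenport–Schinzel sequences: if the symbol
set `T` of a `DS(n, s)` sequence `S` is partitioned into `k` nonempty subsets
`T_1, …, T_k`, and the restricted sequence `S_{T_i}` has length `C_i ≥ 1`, then
`k * |S| ≤ (C_1 + ⋯ + C_k) * λ_s(3k)`. -/
theorem restricted_ds_combination {α : Type*} [DecidableEq α]
    (s n k : ℕ) (hs : 1 ≤ s)
    (T : Finset α) (hTcard : T.card = n)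
    (S : List α) (hS : IsDSSeq n s S) (hST : ∀ x ∈ S, x ∈ T)
    (Ti : Fin k → Finset α)
    (hTiT : T = Finset.univ.biUnion Ti)
    (hdisj : ∀ i j : Fin k, i ≠ j → Disjoint (Ti i) (Ti j))
    (hne : ∀ i : Fin k, (Ti i).Nonempty)
    (C : Fin k → ℕ)
    (hC : ∀ i : Fin k, (restrictSeq S (Ti i)).length = C i)
    (hC1 : ∀ i : Fin k, 1 ≤ C i) :
    k * S.length ≤ (∑ i : Fin k, C i) * lambdaDS s (3 * k) := by
  have hcard : k ≤ ∑ i, (restrictSeq S (Ti i)).length := by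
    simpa using Finset.sum_le_sum fun i (_ : i ∈ Finset.univ) => (hC1 i).trans_eq (hC i).symm
  have hcombination := restricted_ds_combination_general hS Ti (by simpa [hTiT] using hST)
    (by simpa using hcard)
  simp only [hC, Fintype.card_fin] at hcombination
  exact hcombination.trans (Nat.mul_le_mul_left _ (lambdaDS_mono s (by omega)))
end

section
/- Let u ≥ 2. Every circular (u, 2) Davenport–Schinzel sequence has length at most 2u − 2. -/
/-- `S`, viewed as a circular sequence, is a circular `(u, 2)` Davenport–Schinzel
sequence: it uses at most `u` distinct symbols, no two cyclically adjacent
elements are equal, and it contains no four positions appearing in this cyclic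
order and carrying the symbols `a, b, a, b` for distinct symbols `a, b`
(a cyclic alternation of length 4). Cyclic conditions are expressed via all
rotations of the list. -/
def IsCircularDS2 {α : Type*} [DecidableEq α] (u : ℕ) (S : List α) : Prop :=
  S.toFinset.card ≤ u ∧
    (∀ r : ℕ, (S.rotate r).Chain' (· ≠ ·)) ∧
    (∀ a b : α, a ≠ b → ∀ r : ℕ, ¬ [a, b, a, b].Sublist (S.rotate r))

/-!
Repeating the first symbol of a circular sequence at its end produces a linear word of length
`|S| + 1` that still has distinct neighbours and no subsequence `a b a b`. So it suffices that a
nonempty linear word of this kind has length less than twice its number of symbols. If its first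
symbol `x` never recurs, delete it. Otherwise write the word as `x m x r` with `x ∉ m`: since
`x b x b` is forbidden, the words `m` and `x r` have no symbol in common, and the bounds for these
two words add up.
-/

/-- A linear Davenport–Schinzel sequence of order 2: neighbours are distinct and no two distinct
symbols alternate as `a, b, a, b`. The number of symbols is not part of the notion; it is read off
as `l.toFinset.card`. -/
structure IsLinearDS2 {α : Type*} (l : List α) : Prop where
  isChain_ne : l.IsChain (· ≠ ·)
  not_alternating : ∀ a b : α, a ≠ b → ¬ [a, b, a, b].Sublist l

namespace IsLinearDS2

variable {α : Type*} {x : α} {l₁ l₂ m r t : List α}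

theorem of_infix (h : IsLinearDS2 l₂) (hl : l₁ <:+: l₂) : IsLinearDS2 l₁ where
  isChain_ne := h.isChain_ne.infix hl
  not_alternating a b hab hsub := h.not_alternating a b hab (hsub.trans hl.sublist)

theorem disjoint_of_cons_append_cons (h : IsLinearDS2 (x :: (m ++ x :: r))) (hxm : x ∉ m) :
    m.Disjoint (x :: r) := by
  intro y hym hyr
  have hxy : x ≠ y := fun hxy => hxm (hxy ▸ hym)
  have hyr : y ∈ r := (List.mem_cons.1 hyr).resolve_left hxy.symm
  have hsub : [y, x, y].Sublist (m ++ x :: r) :=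
    (List.singleton_sublist.2 hym).append ((List.singleton_sublist.2 hyr).cons_cons x)
  exact h.not_alternating x y hxy (hsub.cons_cons x)

theorem card_toFinset_cons_append_cons [DecidableEq α] (h : IsLinearDS2 (x :: (m ++ x :: r)))
    (hxm : x ∉ m) :
    (x :: (m ++ x :: r)).toFinset.card = m.toFinset.card + (x :: r).toFinset.card := by
  have hdisj := List.disjoint_toFinset_iff_disjoint.2 (h.disjoint_of_cons_append_cons hxm)
  rw [List.toFinset_cons, Finset.insert_eq_of_mem (by simp), List.toFinset_append,
    Finset.card_union_of_disjoint hdisj]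

theorem length_lt_two_mul_card_toFinset [DecidableEq α] {l : List α} (h : IsLinearDS2 l)
    (hne : l ≠ []) : l.length < 2 * l.toFinset.card := by
  match l with
  | [x] => simp
  | x :: y :: t =>
    by_cases hx : x ∈ y :: t
    · obtain ⟨m, r, hsplit, hxm⟩ := List.eq_append_cons_of_mem hx
      have hlen : t.length + 1 = m.length + (r.length + 1) := by
        simpa using congrArg List.length hsplit
      have hm : m ≠ [] := by
        rintro rfl
        exact (List.isChain_cons_cons.1 h.isChain_ne).1 (List.cons.inj hsplit).1.symm
      rw [hsplit] at h ⊢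
      have hbound_m := length_lt_two_mul_card_toFinset (h.of_infix ⟨[x], x :: r, rfl⟩) hm
      have hbound_r := length_lt_two_mul_card_toFinset
        (h.of_infix (List.suffix_append (x :: m) (x :: r)).isInfix) (List.cons_ne_nil x r)
      rw [h.card_toFinset_cons_append_cons hxm]
      simp only [List.length_cons, List.length_append] at hbound_r ⊢
      omega
    · have hbound_tail := length_lt_two_mul_card_toFinset
        (h.of_infix (List.suffix_cons x (y :: t)).isInfix) (List.cons_ne_nil y t)
      rw [List.length_cons, List.toFinset_cons,
        Finset.card_insert_of_notMem (mt List.mem_toFinset.1 hx)]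
      omega
termination_by l.length

theorem cons_append_singleton (hcons : IsLinearDS2 (x :: t)) (happend : IsLinearDS2 (t ++ [x]))
    (ht : t ≠ []) : IsLinearDS2 (x :: (t ++ [x])) where
  isChain_ne := List.IsChain.append_overlap (l₁ := [x]) hcons.isChain_ne happend.isChain_ne ht
  not_alternating a b hab hsub := by
    by_cases hax : a = x
    · subst hax
      have hrev : [b, a, b].Sublist (a :: t.reverse) := by
        simpa using (List.cons_sublist_cons.1 hsub).reverse
      have htail : [b, a, b].Sublist t := by
        simpa using (hrev.of_cons_of_ne hab.symm).reverse
      exact hcons.not_alternating a b hab (htail.cons_cons a)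
    · exact happend.not_alternating a b hab (hsub.of_cons_of_ne hax)

end IsLinearDS2

theorem IsCircularDS2.isLinearDS2_rotate {α : Type*} [DecidableEq α] {u : ℕ} {S : List α}
    (h : IsCircularDS2 u S) (r : ℕ) : IsLinearDS2 (S.rotate r) where
  isChain_ne := h.2.1 r
  not_alternating a b hab := h.2.2 a b hab r

/-- Every circular `(u, 2)` Davenport–Schinzel sequence with `u ≥ 2` has length at
most `2u - 2`. -/
theorem circular_ds2_length_le {α : Type*} [DecidableEq α]
    (u : ℕ) (hu : 2 ≤ u) (S : List α) (h : IsCircularDS2 u S) :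
    S.length ≤ 2 * u - 2 := by
  rcases S with _ | ⟨x, t⟩
  · exact Nat.zero_le _
  rcases eq_or_ne t [] with rfl | ht
  · rw [List.length_singleton]
    omega
  have hcons : IsLinearDS2 (x :: t) := by simpa only [List.rotate_zero] using h.isLinearDS2_rotate 0
  have happend : IsLinearDS2 (t ++ [x]) := by simpa using h.isLinearDS2_rotate 1
  have hbound := (hcons.cons_append_singleton happend ht).length_lt_two_mul_card_toFinset
    (List.cons_ne_nil _ _)
  have hsymbols : (x :: (t ++ [x])).toFinset = (x :: t).toFinset := by simp
  rw [hsymbols, List.length_cons, List.length_append, List.length_singleton] at hbound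
  have hcard : (x :: t).toFinset.card ≤ u := h.1
  rw [List.length_cons]
  omega
end
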